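/- arXiv:2110.14948 — 2 statements merged into one kernel-verified Lean document; each statement's English description precedes it below -/
import Mathlib

section
/- Let U be a finite set with |U| = n and w : U → (0,∞) a positive weight function with total weight W = Σ_{a∈U} w(a). Let a₁, …, a_m (m ≥ 2) be i.i.d. proportional samples, and let Z = C(m,2)^{-1} · Σ_{1 ≤ i < j ≤ m} Y_{ij}, where Y_{ij} = 1/w(a_i) if a_i = a_j and Y_{ij} = 0 otherwise. Then Var(Z) ≤ C(m,2)^{-1} · n/W². -/
open MeasureTheory ProbabilityTheory

/-! The estimators `Y_{ij}` are pairwise uncorrelated, even for overlapping pairs: given `a_i`, the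
mean of `Y_{ij}` is `w(a_i) / W · 1 / w(a_i) = 1 / W` whatever `a_i` is, so `Y_{ij}` is uncorrelated
with every function of the samples other than `a_j`. The variance of the average is thus
`C(m,2)⁻¹` times that of a single `Y_{ij}`, whose second moment is
`∑ x, (w x / W)² / (w x)² = n / W²`.

Since the outer measures of the fibers of `(a_1, …, a_m)` add up to one, this tuple is
a.e. measurable, and its law is a product measure. -/

section LawFromFibers

variable {Ω V : Type*} [MeasurableSpace Ω] {μ : Measure Ω} [IsFiniteMeasure μ]

lemma nullMeasurableSet_of_measure_add_compl_le {s : Set Ω} (h : μ s + μ sᶜ ≤ μ Set.univ) :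
    NullMeasurableSet s μ := by
  have hm : MeasurableSet (toMeasurable μ sᶜ)ᶜ := (measurableSet_toMeasurable μ sᶜ).compl
  have hsub : (toMeasurable μ sᶜ)ᶜ ⊆ s := Set.compl_subset_comm.1 (subset_toMeasurable μ sᶜ)
  have hle : μ s ≤ μ (toMeasurable μ sᶜ)ᶜ := by
    rw [measure_compl (measurableSet_toMeasurable μ sᶜ) (measure_ne_top μ _),
      measure_toMeasurable]
    exact ENNReal.le_sub_of_add_le_right (measure_ne_top μ _) h
  exact hm.nullMeasurableSet.congr
    (ae_eq_of_subset_of_measure_ge hsub hle hm.nullMeasurableSet (measure_ne_top μ s))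

variable [Countable V] [MeasurableSpace V]

lemma aemeasurable_of_tsum_measure_fiber_le {A : Ω → V}
    (h : ∑' v, μ (A ⁻¹' {v}) ≤ μ Set.univ) : AEMeasurable A μ := by
  classical
  have nullMeasurableSet_fiber (v : V) : NullMeasurableSet (A ⁻¹' {v}) μ := by
    refine nullMeasurableSet_of_measure_add_compl_le (le_trans ?_ h)
    rw [ENNReal.tsum_eq_add_tsum_ite (f := fun u ↦ μ (A ⁻¹' {u})) v]
    refine add_le_add_right ?_ _
    calc μ (A ⁻¹' {v})ᶜ ≤ μ (⋃ u, if u = v then ∅ else A ⁻¹' {u}) := by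
          refine measure_mono fun ω hω ↦ Set.mem_iUnion.2 ⟨A ω, ?_⟩
          simpa using hω
      _ ≤ ∑' u, μ (if u = v then ∅ else A ⁻¹' {u}) := measure_iUnion_le _
      _ = ∑' u, if u = v then 0 else μ (A ⁻¹' {u}) := by
          simp only [apply_ite μ, measure_empty]
  refine NullMeasurable.aemeasurable fun s _ ↦ ?_
  rw [← Set.biUnion_preimage_singleton]
  exact .biUnion s.to_countable fun v _ ↦ nullMeasurableSet_fiber v

lemma hasLaw_of_measure_fiber_eq [MeasurableSingletonClass V] {ν : Measure V} {A : Ω → V}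
    (hfiber : ∀ v, μ (A ⁻¹' {v}) = ν {v}) (huniv : ν Set.univ ≤ μ Set.univ) : HasLaw A ν μ := by
  have hA : AEMeasurable A μ := by
    refine aemeasurable_of_tsum_measure_fiber_le (le_trans (le_of_eq ?_) huniv)
    simp_rw [hfiber]
    simpa using ν.tsum_indicator_apply_singleton Set.univ .univ
  refine ⟨hA, Measure.ext_of_singleton fun v ↦ ?_⟩
  rw [Measure.map_apply_of_aemeasurable hA (measurableSet_singleton v), hfiber]

end LawFromFibers

section Pi

variable {Ω ι : Type*} {E : ι → Type*} [MeasurableSpace Ω] {μ : Measure Ω} [Fintype ι]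
  [∀ i, MeasurableSpace (E i)] {ν : ∀ i, Measure (E i)} [∀ i, IsProbabilityMeasure (ν i)]
  {X : ∀ i, Ω → E i}

lemma hasLaw_of_hasLaw_pi (hX : HasLaw (fun ω i ↦ X i ω) (Measure.pi ν) μ) (i : ι) :
    HasLaw (X i) (ν i) μ :=
  (measurePreserving_eval ν i).comp_hasLaw hX

lemma iIndepFun_of_hasLaw_pi (hX : HasLaw (fun ω i ↦ X i ω) (Measure.pi ν) μ) :
    iIndepFun X μ :=
  have := hX.isProbabilityMeasure_iff.2 inferInstance
  (iIndepFun_iff_hasLaw_pi_pi (hasLaw_of_hasLaw_pi hX)).2 hX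

end Pi

section DegenerateKernel

variable {Ω E F ι : Type*} [MeasurableSpace Ω] [MeasurableSpace E] [MeasurableSpace F]
  {μ : Measure Ω} {ν : Measure E} [IsProbabilityMeasure ν] {h : E → E → ℝ} {c : ℝ}

lemma covariance_comp_fst_eq_zero {ρ : Measure F} [IsProbabilityMeasure ρ] {φ : F × E → ℝ}
    {ψ : F → ℝ} (hφ : MemLp φ 2 (ρ.prod ν)) (hψ : MemLp ψ 2 ρ)
    (hc : ∀ᵐ s ∂ρ, ∫ t, φ (s, t) ∂ν = c) :
    cov[φ, fun z ↦ ψ z.1; ρ.prod ν] = 0 := by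
  have hψ' : MemLp (fun z : F × E ↦ ψ z.1) 2 (ρ.prod ν) := hψ.comp_fst ν
  have hmean : ∫ z, φ z ∂ρ.prod ν = c := by
    rw [integral_prod _ (hφ.integrable one_le_two), integral_congr_ae hc]
    simp
  have hmul : ∫ z, φ z * ψ z.1 ∂ρ.prod ν = c * ∫ s, ψ s ∂ρ := by
    rw [integral_prod (fun z ↦ φ z * ψ z.1) (hφ.integrable_mul hψ'), ← integral_const_mul]
    refine integral_congr_ae ?_
    filter_upwards [hc] with s hs
    rw [integral_mul_const, hs]
  rw [covariance_eq_sub hφ hψ']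
  simp only [Pi.mul_apply]
  rw [hmul, hmean, integral_fun_fst]
  simp

/-- A symmetric square-integrable kernel is degenerate, in Hoeffding's sense, if the mean of
`h x y` over `y` is the same constant for almost all `x`. This is what makes the summands of the
U-statistic of `h` pairwise uncorrelated. The kernel is not centered: `c` is its mean. -/
structure IsDegenerateKernel (h : E → E → ℝ) (ν : Measure E) (c : ℝ) : Prop where
  symm : ∀ x y, h x y = h y x
  memLp : MemLp (Function.uncurry h) 2 (ν.prod ν)
  integral_eq : ∀ᵐ x ∂ν, ∫ y, h x y ∂ν = c

variable {X : ι → Ω → E}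

lemma indepFun_triple_of_iIndepFun (hX : iIndepFun X μ) (hmeas : ∀ i, AEMeasurable (X i) μ)
    {i j k l : ι} (hi : i ≠ j) (hk : k ≠ j) (hl : l ≠ j) :
    IndepFun (fun ω ↦ (X i ω, X k ω, X l ω)) (X j) μ := by
  classical
  have hdisj : Disjoint ({i, k, l} : Finset ι) {j} := by simp [hi.symm, hk.symm, hl.symm]
  let triple (v : ({i, k, l} : Finset ι) → E) : E × E × E :=
    (v ⟨i, by simp⟩, v ⟨k, by simp⟩, v ⟨l, by simp⟩)
  let single (v : ({j} : Finset ι) → E) : E := v ⟨j, by simp⟩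
  exact (hX.indepFun_finset₀ {i, k, l} {j} hdisj hmeas).comp
    (φ := triple) (ψ := single) (by fun_prop) (by fun_prop)

namespace IsDegenerateKernel

lemma covariance_eq_zero_of_ne (hh : IsDegenerateKernel h ν c) (hX : iIndepFun X μ)
    (hlaw : ∀ i, HasLaw (X i) ν μ) {i j k l : ι} (hij : i ≠ j) (hkj : k ≠ j) (hlj : l ≠ j)
    (hkl : k ≠ l) :
    cov[fun ω ↦ h (X i ω) (X j ω), fun ω ↦ h (X k ω) (X l ω); μ] = 0 := by
  have := hX.isProbabilityMeasure
  let S (ω : Ω) : E × E × E := (X i ω, X k ω, X l ω)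
  have hmeas (i : ι) : AEMeasurable (X i) μ := (hlaw i).aemeasurable
  have hS : HasLaw S (μ.map S) μ := ⟨by fun_prop, rfl⟩
  have := hS.isProbabilityMeasure_iff.1 inferInstance
  have hjoint : HasLaw (fun ω ↦ (S ω, X j ω)) ((μ.map S).prod ν) μ :=
    (indepFun_triple_of_iIndepFun hX hmeas hij hkj hlj).hasLaw_prod hS (hlaw j)
  have hfst : MeasurePreserving Prod.fst (μ.map S) ν :=
    ⟨measurable_fst, by
      rw [AEMeasurable.map_map_of_aemeasurable (by fun_prop) hS.aemeasurable]
      exact (hlaw i).map_eq⟩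
  have hsnd : MeasurePreserving Prod.snd (μ.map S) (ν.prod ν) :=
    ⟨measurable_snd, by
      rw [AEMeasurable.map_map_of_aemeasurable (by fun_prop) hS.aemeasurable]
      exact ((hX.indepFun hkl).hasLaw_prod (hlaw k) (hlaw l)).map_eq⟩
  have hφ : MemLp (fun z : (E × E × E) × E ↦ h z.1.1 z.2) 2 ((μ.map S).prod ν) :=
    hh.memLp.comp_measurePreserving (hfst.prod (.id ν))
  have hψ : MemLp (fun s : E × E × E ↦ h s.2.1 s.2.2) 2 (μ.map S) :=
    hh.memLp.comp_measurePreserving hsnd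
  have hmean : ∀ᵐ s ∂μ.map S, ∫ t, h s.1 t ∂ν = c :=
    hfst.quasiMeasurePreserving.ae hh.integral_eq
  rw [← covariance_comp_fst_eq_zero hφ hψ hmean]
  exact hjoint.covariance_fun_comp hφ.aestronglyMeasurable.aemeasurable
    (hψ.comp_fst ν).aestronglyMeasurable.aemeasurable

variable [LinearOrder ι]

lemma covariance_eq_zero (hh : IsDegenerateKernel h ν c) (hX : iIndepFun X μ)
    (hlaw : ∀ i, HasLaw (X i) ν μ) {p q : ι × ι} (hp : p.1 < p.2)
    (hq : q.1 < q.2) (hpq : p ≠ q) :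
    cov[fun ω ↦ h (X p.1 ω) (X p.2 ω), fun ω ↦ h (X q.1 ω) (X q.2 ω); μ] = 0 := by
  by_cases hmem : q.1 ≠ p.2 ∧ q.2 ≠ p.2
  · exact hh.covariance_eq_zero_of_ne hX hlaw hp.ne hmem.1 hmem.2 hq.ne
  · simp_rw [hh.symm (X p.1 _)]
    refine hh.covariance_eq_zero_of_ne hX hlaw hp.ne' ?_ ?_ hq.ne <;> grind

lemma variance_sum (hh : IsDegenerateKernel h ν c) (hX : iIndepFun X μ)
    (hlaw : ∀ i, HasLaw (X i) ν μ) {s : Finset (ι × ι)}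
    (hs : ∀ p ∈ s, p.1 < p.2) :
    Var[fun ω ↦ ∑ p ∈ s, h (X p.1 ω) (X p.2 ω); μ] =
      s.card * Var[Function.uncurry h; ν.prod ν] := by
  have := hX.isProbabilityMeasure
  have hpair {p : ι × ι} (hp : p ∈ s) : HasLaw (fun ω ↦ (X p.1 ω, X p.2 ω)) (ν.prod ν) μ :=
    (hX.indepFun (hs p hp).ne).hasLaw_prod (hlaw p.1) (hlaw p.2)
  have hmemLp {p : ι × ι} (hp : p ∈ s) : MemLp (fun ω ↦ h (X p.1 ω) (X p.2 ω)) 2 μ :=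
    ((hpair hp).map_eq.symm ▸ hh.memLp).comp_of_map (hpair hp).aemeasurable
  have hmeas : AEMeasurable (Function.uncurry h) (ν.prod ν) :=
    hh.memLp.aestronglyMeasurable.aemeasurable
  have hdiag {p : ι × ι} (hp : p ∈ s) :
      ∑ q ∈ s, cov[fun ω ↦ h (X p.1 ω) (X p.2 ω), fun ω ↦ h (X q.1 ω) (X q.2 ω); μ] =
        Var[Function.uncurry h; ν.prod ν] := by
    rw [Finset.sum_eq_single_of_mem p hp fun q hq hqp ↦
      hh.covariance_eq_zero hX hlaw (hs p hp) (hs q hq) hqp.symm]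
    exact ((hpair hp).covariance_fun_comp hmeas hmeas).trans (covariance_self hmeas)
  rw [variance_fun_sum' fun p hp ↦ hmemLp hp, Finset.sum_congr rfl fun p hp ↦ hdiag hp,
    Finset.sum_const, nsmul_eq_mul]

end IsDegenerateKernel

/-- The U-statistic of order two: the average of the kernel `h` over all pairs `i < j` of entries
of the sample `x`. It is `0` for samples with fewer than two entries. -/
noncomputable def uStatistic [Fintype ι] [LinearOrder ι] (h : E → E → ℝ) (x : ι → E) : ℝ :=
  ((Fintype.card ι).choose 2 : ℝ)⁻¹ * ∑ p : ι × ι with p.1 < p.2, h (x p.1) (x p.2)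

lemma IsDegenerateKernel.variance_uStatistic [Fintype ι] [LinearOrder ι]
    (hh : IsDegenerateKernel h ν c) (hX : iIndepFun X μ) (hlaw : ∀ i, HasLaw (X i) ν μ) :
    Var[fun ω ↦ uStatistic h (X · ω); μ] =
      ((Fintype.card ι).choose 2 : ℝ)⁻¹ * Var[Function.uncurry h; ν.prod ν] := by
  have hcard : (Finset.univ.filter fun p : ι × ι ↦ p.1 < p.2).card = (Fintype.card ι).choose 2 :=
    Finset.card_product_filter_lt
  simp_rw [uStatistic]
  rw [variance_const_mul, hh.variance_sum hX hlaw (by simp), hcard, ← mul_assoc]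
  congr 1
  obtain hC | hC := eq_or_ne ((Fintype.card ι).choose 2 : ℝ) 0
  · simp [hC]
  · field_simp

end DegenerateKernel

section Collision

variable {U : Type*} [Fintype U]

/-- The law of a proportional sample, drawing `x` with probability `w x / ∑ y, w y`. It is
meant for nonnegative weights: `ENNReal.ofReal` turns negative probabilities into `0`, and a zero
total gives the zero measure. -/
noncomputable def proportionalMeasure [MeasurableSpace U] (w : U → ℝ) : Measure U :=
  ∑ x, ENNReal.ofReal (w x / ∑ y, w y) • Measure.dirac x

/-- The pair estimator `Y_{ij}` as a function of the two samples. -/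
noncomputable def collisionKernel [DecidableEq U] (w : U → ℝ) (x y : U) : ℝ :=
  if x = y then (w x)⁻¹ else 0

variable [MeasurableSpace U] [MeasurableSingletonClass U]

lemma proportionalMeasure_singleton (w : U → ℝ) (x : U) :
    proportionalMeasure w {x} = ENNReal.ofReal (w x / ∑ y, w y) := by
  classical
  simp [proportionalMeasure, Set.indicator_apply]

instance (w : U → ℝ) : IsFiniteMeasure (proportionalMeasure w) := by
  refine ⟨?_⟩
  rw [← Finset.coe_univ, ← sum_measure_singleton]
  simp [proportionalMeasure_singleton]

variable {w : U → ℝ}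

lemma isProbabilityMeasure_proportionalMeasure (hw : ∀ x, 0 ≤ w x) (hW : ∑ x, w x ≠ 0) :
    IsProbabilityMeasure (proportionalMeasure w) := by
  have hp (x : U) : 0 ≤ w x / ∑ y, w y := div_nonneg (hw x) (Finset.sum_nonneg fun y _ ↦ hw y)
  refine ⟨?_⟩
  rw [← Finset.coe_univ, ← sum_measure_singleton]
  simp_rw [proportionalMeasure_singleton]
  rw [← ENNReal.ofReal_sum_of_nonneg fun x _ ↦ hp x, ← Finset.sum_div, div_self hW,
    ENNReal.ofReal_one]

lemma integral_proportionalMeasure (hw : ∀ x, 0 ≤ w x) (f : U → ℝ) :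
    ∫ x, f x ∂proportionalMeasure w = ∑ x, w x / (∑ y, w y) * f x := by
  have hp (x : U) : 0 ≤ w x / ∑ y, w y := div_nonneg (hw x) (Finset.sum_nonneg fun y _ ↦ hw y)
  rw [proportionalMeasure, integral_finsetSum_measure fun x _ ↦
    (integrable_dirac (by simp)).smul_measure ENNReal.ofReal_ne_top]
  refine Finset.sum_congr rfl fun x _ ↦ ?_
  rw [integral_smul_measure, integral_dirac, ENNReal.toReal_ofReal (hp x), smul_eq_mul]

lemma hasLaw_pi_proportionalMeasure {Ω ι : Type*} [MeasurableSpace Ω] {μ : Measure Ω}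
    [IsProbabilityMeasure μ] [Fintype ι] {a : ι → Ω → U} (hw : ∀ x, 0 ≤ w x)
    (hW : ∑ x, w x ≠ 0)
    (ha : ∀ v : ι → U, μ {ω | ∀ i, a i ω = v i} = ∏ i, ENNReal.ofReal (w (v i) / ∑ x, w x)) :
    HasLaw (fun ω i ↦ a i ω) (Measure.pi fun _ ↦ proportionalMeasure w) μ := by
  have := isProbabilityMeasure_proportionalMeasure hw hW
  refine hasLaw_of_measure_fiber_eq (fun v ↦ ?_) (by simp)
  simp_rw [Measure.pi_singleton, proportionalMeasure_singleton, ← ha]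
  congr 1
  ext ω
  simp [funext_iff]

variable [DecidableEq U]

lemma integral_collisionKernel (hw : ∀ x, 0 ≤ w x) {x : U} (hx : w x ≠ 0) :
    ∫ y, collisionKernel w x y ∂proportionalMeasure w = (∑ y, w y)⁻¹ := by
  simp_rw [integral_proportionalMeasure hw, collisionKernel]
  simp [div_eq_mul_inv, mul_right_comm, hx]

lemma integral_collisionKernel_sq (hw : ∀ x, 0 < w x) :
    ∫ z, collisionKernel w z.1 z.2 ^ 2 ∂(proportionalMeasure w).prod (proportionalMeasure w) =
      Fintype.card U / (∑ x, w x) ^ 2 := by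
  have hw' (x : U) : 0 ≤ w x := (hw x).le
  rw [integral_prod _ .of_finite]
  have hterm (x : U) :
      w x / (∑ y, w y) * (w x / (∑ y, w y) * (w x)⁻¹ ^ 2) = ((∑ y, w y) ^ 2)⁻¹ := by
    have := (hw x).ne'
    field_simp
  simp_rw [integral_proportionalMeasure hw', collisionKernel, ite_pow]
  simp only [ne_eq, OfNat.ofNat_ne_zero, not_false_eq_true, zero_pow, mul_ite, mul_zero,
    Finset.sum_ite_eq, Finset.mem_univ, if_true, hterm]
  simp [div_eq_mul_inv]

lemma isDegenerateKernel_collisionKernel (hw : ∀ x, 0 < w x) :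
    IsDegenerateKernel (collisionKernel w) (proportionalMeasure w) (∑ x, w x)⁻¹ where
  symm x y := by grind [collisionKernel]
  memLp := .of_discrete
  integral_eq := .of_forall fun x ↦ integral_collisionKernel (fun y ↦ (hw y).le) (hw x).ne'

lemma variance_collisionKernel_le (hw : ∀ x, 0 < w x) (hW : ∑ x, w x ≠ 0) :
    Var[Function.uncurry (collisionKernel w);
        (proportionalMeasure w).prod (proportionalMeasure w)] ≤
      Fintype.card U / (∑ x, w x) ^ 2 := by
  have := isProbabilityMeasure_proportionalMeasure (fun x ↦ (hw x).le) hW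
  exact (variance_le_expectation_sq .of_discrete).trans_eq (integral_collisionKernel_sq hw)

end Collision

/-- For `m ≥ 2` i.i.d. proportional samples, the averaged pair estimator
`Z = C(m,2)⁻¹ · Σ_{i<j} Y_{ij}` satisfies `Var(Z) ≤ C(m,2)⁻¹ · n/W²`. -/
theorem averaged_pair_estimator_variance
    {Ω U : Type*} [MeasurableSpace Ω] (μ : Measure Ω) [IsProbabilityMeasure μ]
    [Fintype U] [DecidableEq U]
    (n : ℕ) (hn : Fintype.card U = n)
    (w : U → ℝ) (hw : ∀ x, 0 < w x)
    (W : ℝ) (hW : W = ∑ x, w x)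
    (m : ℕ) (hm : 2 ≤ m) (a : Fin m → Ω → U)
    (hlaw : ∀ v : Fin m → U,
      μ {ω | ∀ i, a i ω = v i} = ∏ i, ENNReal.ofReal (w (v i) / W))
    (Y : Fin m → Fin m → Ω → ℝ)
    (hY : ∀ i j ω, Y i j ω = if a i ω = a j ω then (w (a i ω))⁻¹ else 0)
    (Z : Ω → ℝ)
    (hZ : ∀ ω, Z ω = ((m.choose 2 : ℝ))⁻¹ * ∑ i, ∑ j ∈ Finset.Ioi i, Y i j ω) :
    variance Z μ ≤ ((m.choose 2 : ℝ))⁻¹ * (n / W ^ 2) := by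
  obtain ⟨ω⟩ : Nonempty Ω := nonempty_of_isProbabilityMeasure μ
  have : Nonempty U := ⟨a ⟨0, by omega⟩ ω⟩
  let : MeasurableSpace U := ⊤
  subst hn hW
  have hW : ∑ x, w x ≠ 0 := (Finset.sum_pos (fun x _ ↦ hw x) Finset.univ_nonempty).ne'
  have := isProbabilityMeasure_proportionalMeasure (fun x ↦ (hw x).le) hW
  have ha : HasLaw (fun ω i ↦ a i ω) (Measure.pi fun _ ↦ proportionalMeasure w) μ :=
    hasLaw_pi_proportionalMeasure (fun x ↦ (hw x).le) hW hlaw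
  have hZ' : Z = fun ω ↦ uStatistic (collisionKernel w) (a · ω) := by
    ext ω
    simp only [hZ, hY, uStatistic, collisionKernel, Fintype.card_fin, Finset.sum_filter,
      Fintype.sum_prod_type, ← Finset.filter_lt_eq_Ioi]
  rw [hZ', (isDegenerateKernel_collisionKernel hw).variance_uStatistic
    (iIndepFun_of_hasLaw_pi ha) (hasLaw_of_hasLaw_pi ha), Fintype.card_fin]
  gcongr
  exact variance_collisionKernel_le hw hW
end

section
/- Let X₁, …, X_m be i.i.d. random variables, each uniformly distributed on a finite set of size n ≥ 1, and let ℓ = |{X₁, …, X_m}| be the number of distinct elements among the m samples. Then Var(ℓ) ≤ m²/n. -/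
open MeasureTheory ProbabilityTheory

/-!
Write `n` for the size of the sampled set and `D` for the number of distinct values among the first
`m` samples. Given these, one more sample is new with probability `1 - D / n`, so the count becomes
`(1 - 1 / n) * D + 1` on average, with conditional variance `(D / n) * (1 - D / n)`. By the law of
total variance the variance `V` turns into `(1 - 1 / n) ^ 2 * V + 𝔼 (D / n) * (1 - D / n)`, which is
at most `V + m / n` since `D ≤ m`. Summing up, `V ≤ (0 + 1 + ⋯ + (m - 1)) / n = (m.choose 2) / n`.

The law of the sample is given through outer measures. As those of the fibres add up to `1`, each
preimage and its complement have outer measures adding up to at most `1`, which makes the sample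
a.e.-measurable.
-/

open scoped BigOperators

section UniformMap

variable {Ω β : Type*} [MeasurableSpace Ω] {μ : Measure Ω}

theorem nullMeasurableSet_of_measure_add_measure_compl_le [IsFiniteMeasure μ] {s : Set Ω}
    (h : μ s + μ sᶜ ≤ μ Set.univ) : NullMeasurableSet s μ := by
  have hmeas : MeasurableSet (toMeasurable μ sᶜ)ᶜ := (measurableSet_toMeasurable μ sᶜ).compl
  have hsub : (toMeasurable μ sᶜ)ᶜ ⊆ s := Set.compl_subset_comm.mp (subset_toMeasurable μ sᶜ)
  have hle : μ s ≤ μ (toMeasurable μ sᶜ)ᶜ := by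
    rw [measure_compl (measurableSet_toMeasurable μ sᶜ) (measure_ne_top μ _), measure_toMeasurable]
    exact ENNReal.le_sub_of_add_le_right (measure_ne_top μ _) h
  exact hmeas.nullMeasurableSet.congr
    (ae_eq_of_subset_of_measure_ge hsub hle hmeas.nullMeasurableSet (measure_ne_top μ s))

variable [Fintype β] {T : Ω → β}

theorem measure_preimage_le_sum_measure_fiber (s : Set β) [DecidablePred (· ∈ s)] :
    μ (T ⁻¹' s) ≤ ∑ b with b ∈ s, μ (T ⁻¹' {b}) := by
  refine (measure_mono fun ω hω ↦ ?_).trans (measure_biUnion_finset_le _ _)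
  simpa using hω

variable [MeasurableSpace β]

theorem aemeasurable_of_sum_measure_fiber_le [IsFiniteMeasure μ]
    (h : ∑ b, μ (T ⁻¹' {b}) ≤ μ Set.univ) : AEMeasurable T μ := by
  classical
  refine NullMeasurable.aemeasurable fun s _ ↦
    nullMeasurableSet_of_measure_add_measure_compl_le ?_
  calc μ (T ⁻¹' s) + μ (T ⁻¹' sᶜ)
      ≤ ∑ b with b ∈ s, μ (T ⁻¹' {b}) + ∑ b with b ∈ sᶜ, μ (T ⁻¹' {b}) :=
        add_le_add (measure_preimage_le_sum_measure_fiber s)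
          (measure_preimage_le_sum_measure_fiber sᶜ)
    _ = ∑ b, μ (T ⁻¹' {b}) := Finset.sum_filter_add_sum_filter_not _ _ _
    _ ≤ μ Set.univ := h

theorem aemeasurable_of_measure_fiber_eq_inv_card [IsProbabilityMeasure μ]
    (h : ∀ b, μ (T ⁻¹' {b}) = (Fintype.card β : ENNReal)⁻¹) : AEMeasurable T μ := by
  refine aemeasurable_of_sum_measure_fiber_le ?_
  simp [h, ENNReal.mul_inv_le_one]

variable [MeasurableSingletonClass β]

theorem map_eq_uniformOn_univ [IsProbabilityMeasure μ]
    (h : ∀ b, μ (T ⁻¹' {b}) = (Fintype.card β : ENNReal)⁻¹) :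
    μ.map T = uniformOn Set.univ := by
  refine Measure.ext_of_singleton fun b ↦ ?_
  rw [Measure.map_apply_of_aemeasurable (aemeasurable_of_measure_fiber_eq_inv_card h)
    (measurableSet_singleton b), h, uniformOn_univ]
  simp

theorem variance_comp_eq_variance_uniformOn_univ [IsProbabilityMeasure μ]
    (h : ∀ b, μ (T ⁻¹' {b}) = (Fintype.card β : ENNReal)⁻¹) (f : β → ℝ) :
    Var[f ∘ T; μ] = Var[f; uniformOn Set.univ] := by
  rw [← map_eq_uniformOn_univ h,
    variance_map .of_discrete (aemeasurable_of_measure_fiber_eq_inv_card h)]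

theorem integral_uniformOn_univ (f : β → ℝ) : ∫ b, f b ∂(uniformOn Set.univ) = 𝔼 b, f b := by
  rw [integral_fintype .of_finite, Fintype.expect_eq_sum_div_card, Finset.sum_div]
  simp [measureReal_def, uniformOn_univ, div_eq_inv_mul]

theorem variance_uniformOn_univ [Nonempty β] (f : β → ℝ) :
    Var[f; uniformOn Set.univ] = 𝔼 b, f b ^ 2 - (𝔼 b, f b) ^ 2 := by
  rw [variance_eq_sub .of_discrete, integral_uniformOn_univ, integral_uniformOn_univ]
  rfl

end UniformMap

/-- The number of distinct values of a finite family `v`; for a family of samples this is the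
paper's `ℓ`. -/
def numDistinct {ι U : Type*} [Fintype ι] [DecidableEq U] (v : ι → U) : ℕ :=
  (Finset.univ.image v).card

section DistinctValues

variable {U : Type*}

theorem numDistinct_le_card {ι : Type*} [Fintype ι] [DecidableEq U] (v : ι → U) :
    numDistinct v ≤ Fintype.card ι :=
  Finset.card_image_le

theorem numDistinct_cons [DecidableEq U] {m : ℕ} (u : U) (v : Fin m → U) :
    numDistinct (Fin.cons u v : Fin (m + 1) → U) = (insert u (Finset.univ.image v)).card := by
  unfold numDistinct
  congr 1
  ext x
  simp [Fin.exists_fin_succ, eq_comm]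

variable [Fintype U]

theorem expect_fin_succ {M : Type*} [AddCommMonoid M] [Module ℚ≥0 M] {m : ℕ}
    (f : (Fin (m + 1) → U) → M) :
    𝔼 v, f v = 𝔼 v : Fin m → U, 𝔼 u, f (Fin.cons u v) := by
  rw [Finset.expect_comm, ← Finset.expect_product', Finset.univ_product_univ]
  exact (Fintype.expect_equiv (Fin.consEquiv fun _ ↦ U) _ _ fun _ ↦ rfl).symm

variable [DecidableEq U] [Nonempty U]

theorem expect_card_insert (F : ℕ → ℝ) (S : Finset U) :
    𝔼 u, F (insert u S).card
      = S.card / Fintype.card U * F S.card + (1 - S.card / Fintype.card U) * F (S.card + 1) := by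
  have hmem : ∑ u ∈ S, F (insert u S).card = S.card * F S.card := by
    rw [Finset.sum_congr rfl fun u hu ↦ by rw [Finset.insert_eq_of_mem hu],
      Finset.sum_const, nsmul_eq_mul]
  have hnotMem : ∑ u ∈ Sᶜ, F (insert u S).card
      = (Fintype.card U - S.card) * F (S.card + 1) := by
    rw [Finset.sum_congr rfl fun u hu ↦ by
        rw [Finset.card_insert_of_notMem (Finset.mem_compl.mp hu)],
      Finset.sum_const, nsmul_eq_mul, Finset.card_compl, Nat.cast_sub (Finset.card_le_univ S)]
  rw [Fintype.expect_eq_sum_div_card, ← Finset.sum_add_sum_compl S, hmem, hnotMem]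
  field_simp

theorem expect_comp_numDistinct_succ (m : ℕ) (F : ℕ → ℝ) :
    𝔼 v : Fin (m + 1) → U, F (numDistinct v)
      = 𝔼 v : Fin m → U, (numDistinct v / Fintype.card U * F (numDistinct v)
          + (1 - numDistinct v / Fintype.card U) * F (numDistinct v + 1)) := by
  rw [expect_fin_succ]
  simp only [numDistinct_cons, expect_card_insert]
  rfl

theorem expect_numDistinct_succ (m : ℕ) :
    𝔼 v : Fin (m + 1) → U, (numDistinct v : ℝ)
      = 𝔼 v : Fin m → U, ((1 - 1 / Fintype.card U) * (numDistinct v : ℝ) + 1) := by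
  rw [expect_comp_numDistinct_succ m fun k ↦ (k : ℝ)]
  refine Finset.expect_congr rfl fun v _ ↦ ?_
  push_cast
  ring

theorem expect_numDistinct_sq_succ (m : ℕ) :
    𝔼 v : Fin (m + 1) → U, (numDistinct v : ℝ) ^ 2
      = 𝔼 v : Fin m → U, ((1 - 1 / Fintype.card U) * (numDistinct v : ℝ) + 1) ^ 2
        + 𝔼 v : Fin m → U, (numDistinct v / Fintype.card U : ℝ)
            * (1 - numDistinct v / Fintype.card U) := by
  rw [expect_comp_numDistinct_succ m fun k ↦ (k : ℝ) ^ 2, ← Finset.expect_add_distrib]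
  refine Finset.expect_congr rfl fun v _ ↦ ?_
  push_cast
  ring

theorem expect_numDistinct_div_card_mul_one_sub_le (m : ℕ) :
    𝔼 v : Fin m → U, (numDistinct v / Fintype.card U : ℝ) * (1 - numDistinct v / Fintype.card U)
      ≤ m / Fintype.card U := by
  refine Finset.expect_le Finset.univ_nonempty fun v _ ↦ ?_
  have hle : (numDistinct v : ℝ) ≤ m := by
    exact_mod_cast (numDistinct_le_card v).trans_eq (Fintype.card_fin m)
  calc (numDistinct v / Fintype.card U : ℝ) * (1 - numDistinct v / Fintype.card U)
      ≤ numDistinct v / Fintype.card U :=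
        mul_le_of_le_one_right (by positivity) (sub_le_self _ (by positivity))
    _ ≤ m / Fintype.card U := by gcongr

variable [MeasurableSpace U] [MeasurableSingletonClass U]

theorem variance_numDistinct_succ (m : ℕ) :
    Var[fun v : Fin (m + 1) → U ↦ (numDistinct v : ℝ); uniformOn Set.univ]
      = (1 - 1 / Fintype.card U) ^ 2
          * Var[fun v : Fin m → U ↦ (numDistinct v : ℝ); uniformOn Set.univ]
        + 𝔼 v : Fin m → U, (numDistinct v / Fintype.card U : ℝ)
            * (1 - numDistinct v / Fintype.card U) := by
  have haffine : Var[fun v : Fin m → U ↦ (1 - 1 / Fintype.card U) * (numDistinct v : ℝ) + 1;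
        uniformOn Set.univ]
      = (1 - 1 / Fintype.card U) ^ 2
          * Var[fun v : Fin m → U ↦ (numDistinct v : ℝ); uniformOn Set.univ] := by
    rw [variance_add_const .of_discrete, variance_const_mul]
  rw [← haffine, variance_uniformOn_univ, variance_uniformOn_univ, expect_numDistinct_sq_succ,
    expect_numDistinct_succ]
  ring

theorem variance_numDistinct_succ_le (m : ℕ) :
    Var[fun v : Fin (m + 1) → U ↦ (numDistinct v : ℝ); uniformOn Set.univ]
      ≤ Var[fun v : Fin m → U ↦ (numDistinct v : ℝ); uniformOn Set.univ] + m / Fintype.card U := by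
  have hcard : (1 : ℝ) ≤ Fintype.card U := by exact_mod_cast Fintype.card_pos (α := U)
  have hcontract : (1 - 1 / Fintype.card U : ℝ) ^ 2 ≤ 1 :=
    pow_le_one₀ (sub_nonneg.mpr (div_le_one_of_le₀ hcard (by positivity)))
      (sub_le_self _ (by positivity))
  rw [variance_numDistinct_succ]
  exact add_le_add (mul_le_of_le_one_left (variance_nonneg _ _) hcontract)
    (expect_numDistinct_div_card_mul_one_sub_le m)

theorem variance_numDistinct_le (m : ℕ) :
    Var[fun v : Fin m → U ↦ (numDistinct v : ℝ); uniformOn Set.univ]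
      ≤ m.choose 2 / Fintype.card U := by
  induction m with
  | zero => simp [variance_uniformOn_univ, numDistinct]
  | succ m ih =>
    calc Var[fun v : Fin (m + 1) → U ↦ (numDistinct v : ℝ); uniformOn Set.univ]
        ≤ m.choose 2 / Fintype.card U + m / Fintype.card U :=
          (variance_numDistinct_succ_le m).trans (by gcongr)
      _ = (m + 1).choose 2 / Fintype.card U := by
          rw [Nat.choose_succ_succ, Nat.choose_one_right]
          push_cast
          ring

end DistinctValues

/-- For `m` i.i.d. uniform samples from a set of size `n ≥ 1`, the number
`ℓ` of distinct sampled elements satisfies `Var(ℓ) ≤ m²/n`. -/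
theorem distinct_elements_variance_bound
    {Ω U : Type*} [MeasurableSpace Ω] (μ : Measure Ω) [IsProbabilityMeasure μ]
    [Fintype U] [DecidableEq U]
    (n : ℕ) (hn : 1 ≤ n) (hcard : Fintype.card U = n)
    (m : ℕ) (X : Fin m → Ω → U)
    (hlaw : ∀ v : Fin m → U,
      μ {ω | ∀ i, X i ω = v i} = ((n : ENNReal))⁻¹ ^ m)
    (ℓ : Ω → ℕ)
    (hℓ : ∀ ω, ℓ ω = (Finset.univ.image (fun i => X i ω)).card) :
    variance (fun ω => (ℓ ω : ℝ)) μ ≤ (m : ℝ) ^ 2 / n := by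
  subst hcard
  have : Nonempty U := Fintype.card_pos_iff.mp hn
  let : MeasurableSpace U := ⊤
  let sample : Ω → Fin m → U := fun ω i ↦ X i ω
  have hfiber (v : Fin m → U) :
      μ (sample ⁻¹' {v}) = (Fintype.card (Fin m → U) : ENNReal)⁻¹ := by
    have hset : sample ⁻¹' {v} = {ω | ∀ i, X i ω = v i} := Set.ext fun _ ↦ funext_iff
    rw [hset, hlaw]
    simp [ENNReal.inv_pow]
  have hcomp : (fun ω ↦ (ℓ ω : ℝ)) = (fun v ↦ (numDistinct v : ℝ)) ∘ sample :=
    funext fun ω ↦ congrArg Nat.cast (hℓ ω)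
  calc Var[fun ω ↦ (ℓ ω : ℝ); μ]
      = Var[fun v : Fin m → U ↦ (numDistinct v : ℝ); uniformOn Set.univ] := by
        rw [hcomp, variance_comp_eq_variance_uniformOn_univ hfiber]
    _ ≤ m.choose 2 / Fintype.card U := variance_numDistinct_le m
    _ ≤ (m : ℝ) ^ 2 / Fintype.card U := by
        gcongr
        exact_mod_cast Nat.choose_le_pow m 2
end
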